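/- arXiv:1911.13059 — 2 statements merged into one kernel-verified Lean document; each statement's English description precedes it below -/
import Mathlib

section
/- Let C = G_{k,θ}(g) be a θ-Gabidulin code (θ a generator of Gal(F_{q^m}/F_q), g ∈ F_{q^m}^n with rk_q(g) = n, 1 ≤ k ≤ n ≤ m). For integers i ≥ 0 and 0 ≤ r ≤ k, the sum S_i^{θ^r}(C) = Σ_{j=0}^i θ^{rj}(C) equals ⟨g, θ(g), ..., θ^{min(k+ir,n)-1}(g)⟩_{F_{q^m}}, and hence has dimension min{k + ir, n}. -/
open Submodule

noncomputable section

variable {E : Type} [Field E]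

instance (σ : E ≃+* E) : RingHomSurjective (σ : E →+* E) := ⟨σ.surjective⟩

/-- Entrywise application of a field automorphism to vectors, as a semilinear map. -/
def entrywiseR {n : ℕ} (σ : E ≃+* E) :
    (Fin n → E) →ₛₗ[(σ : E →+* E)] (Fin n → E) where
  toFun v := fun i => σ (v i)
  map_add' x y := by funext i; simp
  map_smul' r x := by funext i; simp [smul_eq_mul, map_mul]

/-- Image of a code under entrywise application of a ring automorphism. -/
def mapCodeR {n : ℕ} (σ : E ≃+* E) (C : Submodule E (Fin n → E)) :
    Submodule E (Fin n → E) :=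
  C.map (entrywiseR σ)

/-- Image of a code under entrywise application of an F-algebra automorphism. -/
def mapCode {F : Type} [Field F] [Algebra F E] {n : ℕ} (σ : E ≃ₐ[F] E)
    (C : Submodule E (Fin n → E)) : Submodule E (Fin n → E) :=
  mapCodeR σ.toRingEquiv C

/-- Right action of a matrix over the base field on a code. -/
def matAct (F : Type) [Field F] [Algebra F E] {n : ℕ} (A : Matrix (Fin n) (Fin n) F)
    (C : Submodule E (Fin n → E)) : Submodule E (Fin n → E) :=
  C.map ((A.map (algebraMap F E)).vecMulLinear)

/-- Semilinear equivalence of rank-metric codes: C₁ = τ(C₂)·A. -/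
def CodeEquiv (F : Type) [Field F] [Algebra F E] {n : ℕ}
    (C₁ C₂ : Submodule E (Fin n → E)) : Prop :=
  ∃ (τ : E ≃+* E) (A : Matrix (Fin n) (Fin n) F), IsUnit A ∧
    C₁ = matAct F A (mapCodeR τ C₂)

/-- Gabidulin code. -/
def Gab {F : Type} [Field F] [Algebra F E] {n : ℕ} (θ : E ≃ₐ[F] E) (k : ℕ)
    (g : Fin n → E) : Submodule E (Fin n → E) :=
  Submodule.span E (Set.range fun j : Fin k => fun i => (θ ^ (j : ℕ)) (g i))

/-- Sum of the images of C under the first i+1 powers of σ. -/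
def sumCode {F : Type} [Field F] [Algebra F E] {n : ℕ} (σ : E ≃ₐ[F] E) (i : ℕ)
    (C : Submodule E (Fin n → E)) : Submodule E (Fin n → E) :=
  ⨆ j : Fin (i + 1), mapCode (σ ^ (j : ℕ)) C

/-- Intersection of the images of C under the first i+1 powers of σ. -/
def interCode {F : Type} [Field F] [Algebra F E] {n : ℕ} (σ : E ≃ₐ[F] E) (i : ℕ)
    (C : Submodule E (Fin n → E)) : Submodule E (Fin n → E) :=
  ⨅ j : Fin (i + 1), mapCode (σ ^ (j : ℕ)) C

/-- Dual code with respect to the standard inner product. -/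
def dualCode {n : ℕ} (C : Submodule E (Fin n → E)) : Submodule E (Fin n → E) where
  carrier := {u | ∀ v ∈ C, ∑ i, u i * v i = 0}
  add_mem' := by
    intro a b ha hb v hv
    simp only [Set.mem_setOf_eq] at *
    simp only [Pi.add_apply, add_mul, Finset.sum_add_distrib, ha v hv, hb v hv, add_zero]
  zero_mem' := by intro v hv; simp
  smul_mem' := by
    intro c a ha v hv
    simp only [Set.mem_setOf_eq] at *
    simp only [Pi.smul_apply, smul_eq_mul, mul_assoc, ← Finset.mul_sum, ha v hv, mul_zero]

/-- Twisted Gabidulin code. -/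
def TGab {F : Type} [Field F] [Algebra F E] {n : ℕ} (θ : E ≃ₐ[F] E) (k : ℕ) (η : E)
    (g : Fin n → E) : Submodule E (Fin n → E) :=
  Submodule.span E
    (insert (fun i => g i + η * (θ ^ k) (g i))
      (Set.range fun j : Fin (k - 1) => fun i => (θ ^ ((j : ℕ) + 1)) (g i)))

/-
Let `K` be the fixed field of `σ`. The Moore matrix with rows `g, σ g, …, σ ^ (t - 1) g` has rank
`min t ρ`, where `ρ` is the rank of `g` over `K`. Since the span of its columns depends only on the
`K`-span of `g`, one may take `g` independent over `K`, and of length at most `t`. A relation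
expressing one column through the others, compared with its image under `σ`, yields a relation with
one row and one column fewer, whose coefficients `σ c - c` vanish by induction. So the coefficients
`c` lie in `K`, and the first row contradicts the independence of `g`.

On the coding side, `θ ^ (r j)` moves the window of exponents `[0, k)` of a Gabidulin code to
`[r j, r j + k)`. As `r ≤ k`, these windows leave no gap and cover exactly `[0, k + i r)` for
`j = 0, …, i`. The sum is thus spanned by `g, θ g, …, θ ^ (k + i r - 1) g`, and by the rank formula
already by the first `min (k + i r) ρ` of these vectors.
-/

section MooreMatrix

variable {K L ι : Type*} [Field K] [Field L] [Algebra K L]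

/-- The Moore matrix with `t` rows of a vector `g`, for an arbitrary endomorphism `σ` in place of the
Frobenius map. Row `j`, counted from `0`, is `σ ^ j` applied entrywise to `g`, so that the rows
generate a Gabidulin code. -/
def mooreMatrix (σ : L →ₐ[K] L) (t : ℕ) (g : ι → L) : Matrix (Fin t) ι L :=
  Matrix.of fun j i => (σ ^ (j : ℕ)) (g i)

theorem apply_eq_self_of_sum_mul_pow_apply_eq [Fintype ι] {σ : L →ₐ[K] L} {t : ℕ} {g c : ι → L}
    {x : L} (hg : LinearIndependent L (mooreMatrix σ t (σ ∘ g)).col)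
    (hc : ∀ j ≤ t, ∑ i, c i * (σ ^ j) (g i) = (σ ^ j) x) (i : ι) : σ (c i) = c i := by
  have hdiff : ∀ j < t, ∑ i, (σ (c i) - c i) * (σ ^ (j + 1)) (g i) = 0 := by
    intro j hj
    have himage := congrArg σ (hc j hj.le)
    have hnext := hc (j + 1) hj
    simp only [map_sum, map_mul, pow_succ', AlgHom.mul_apply] at himage hnext ⊢
    simp only [sub_mul, Finset.sum_sub_distrib, himage, hnext, sub_self]
  refine sub_eq_zero.1 (Fintype.linearIndependent_iff.1 hg (fun i => σ (c i) - c i) ?_ i)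
  ext j
  simpa [mooreMatrix, pow_succ] using hdiff j j.isLt

theorem linearIndependent_col_mooreMatrix {σ : L →ₐ[K] L}
    (hσ : ∀ x, σ x = x → x ∈ Set.range (algebraMap K L)) {s t : ℕ} (hst : s ≤ t)
    {g : Fin s → L} (hg : LinearIndependent K g) :
    LinearIndependent L (mooreMatrix σ t g).col := by
  induction s generalizing t with
  | zero => exact linearIndependent_empty_type
  | succ s ih =>
    obtain ⟨htail, hhead⟩ := linearIndependent_finSucc.1 hg
    refine linearIndependent_finSucc.2 ⟨ih (by omega) htail, fun hmem => hhead ?_⟩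
    obtain ⟨t, rfl⟩ : ∃ t', t = t' + 1 := ⟨t - 1, by omega⟩
    obtain ⟨c, hc⟩ := (mem_span_range_iff_exists_fun L).1 hmem
    have hrel : ∀ j ≤ t, ∑ i, c i * (σ ^ j) (Fin.tail g i) = (σ ^ j) (g 0) := fun j hj => by
      simpa [mooreMatrix, Fin.tail] using congrFun hc ⟨j, Nat.lt_succ_of_le hj⟩
    have hshift : LinearIndependent L (mooreMatrix σ t (σ ∘ Fin.tail g)).col :=
      ih (by omega) (htail.map' σ.toLinearMap (LinearMap.ker_eq_bot.2 σ.injective))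
    choose a ha using fun i => hσ (c i) (apply_eq_self_of_sum_mul_pow_apply_eq hshift hrel i)
    refine (mem_span_range_iff_exists_fun K).2 ⟨a, ?_⟩
    simpa [Algebra.smul_def, ha] using hrel 0 t.zero_le

theorem rank_mooreMatrix_of_linearIndependent {σ : L →ₐ[K] L}
    (hσ : ∀ x, σ x = x → x ∈ Set.range (algebraMap K L)) (t : ℕ) {s : ℕ}
    {g : Fin s → L} (hg : LinearIndependent K g) :
    (mooreMatrix σ t g).rank = min t s := by
  refine le_antisymm (le_min (Matrix.rank_le_height _) (Matrix.rank_le_width _)) ?_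
  obtain ⟨e, he⟩ : ∃ e : Fin (min t s) → Fin s, Function.Injective e :=
    ⟨Fin.castLE (min_le_right t s), Fin.castLE_injective _⟩
  have hcol : LinearIndependent L (mooreMatrix σ t (g ∘ e)).col :=
    linearIndependent_col_mooreMatrix hσ (min_le_left t s) (hg.comp e he)
  calc min t s = (mooreMatrix σ t (g ∘ e)).rank := by
        rw [Matrix.rank_eq_finrank_span_cols, finrank_span_eq_card hcol, Fintype.card_fin]
    _ = ((mooreMatrix σ t g).submatrix id e).rank := rfl
    _ ≤ (mooreMatrix σ t g).rank := Matrix.rank_submatrix_le _ _ _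

theorem span_range_col_mooreMatrix (σ : L →ₐ[K] L) (t : ℕ) (g : ι → L) :
    span L (Set.range (mooreMatrix σ t g).col) =
      span L ((span K (Set.range g)).map
        (LinearMap.pi fun j : Fin t => (σ ^ (j : ℕ)).toLinearMap)) := by
  rw [map_span, span_span_of_tower, ← Set.range_comp]
  congr 1

theorem rank_mooreMatrix [Fintype ι] {σ : L →ₐ[K] L}
    (hσ : ∀ x, σ x = x → x ∈ Set.range (algebraMap K L)) (t : ℕ) (g : ι → L) :
    (mooreMatrix σ t g).rank = min t (Module.finrank K (span K (Set.range g))) := by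
  have := FiniteDimensional.span_of_finite K (Set.finite_range g)
  obtain ⟨b, -, hspan, hb⟩ := exists_fun_fin_finrank_span_eq K (Set.range g)
  rw [← rank_mooreMatrix_of_linearIndependent hσ t hb, Matrix.rank_eq_finrank_span_cols,
    Matrix.rank_eq_finrank_span_cols, span_range_col_mooreMatrix, span_range_col_mooreMatrix, hspan]

end MooreMatrix

theorem iUnion_Ico_mul_add {r k : ℕ} (hr : r ≤ k) (i : ℕ) :
    ⋃ j : Fin (i + 1), Set.Ico (r * (j : ℕ)) (r * j + k) = Set.Ico 0 (k + i * r) := by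
  induction i with
  | zero => ext; simp
  | succ i ih =>
    ext x
    have hx := Set.ext_iff.1 ih x
    simp only [Set.mem_iUnion, Set.mem_Ico, Fin.exists_fin_succ',
      Fin.val_castSucc, Fin.val_last] at hx ⊢
    grind

section Gabidulin

variable {F : Type} [Field F] [Algebra F E] {n : ℕ} (θ : E ≃ₐ[F] E) (g : Fin n → E)

theorem Gab_eq_span_image (t : ℕ) :
    Gab θ t g = span E ((fun (l : ℕ) i => (θ ^ l) (g i)) '' Set.Ico 0 t) := by
  have hIco : Set.range ((↑) : Fin t → ℕ) = Set.Ico 0 t := by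
    rw [Fin.range_val, ← Set.Ico_bot, Nat.bot_eq_zero]
  rw [← hIco, ← Set.range_comp]
  rfl

theorem Gab_mono {s t : ℕ} (hst : s ≤ t) : Gab θ s g ≤ Gab θ t g := by
  simp only [Gab_eq_span_image]
  gcongr

theorem mapCode_pow_Gab (s t : ℕ) :
    mapCode (θ ^ s) (Gab θ t g) =
      span E ((fun (l : ℕ) i => (θ ^ l) (g i)) '' Set.Ico s (s + t)) := by
  have hshift (l : ℕ) :
      entrywiseR (θ ^ s).toRingEquiv (fun i => (θ ^ l) (g i)) = fun i => (θ ^ (s + l)) (g i) := by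
    rw [pow_add]
    rfl
  have hIco : Set.Ico s (s + t) = (s + ·) '' Set.Ico 0 t := by
    rw [Set.image_const_add_Ico, add_zero]
  simp only [Gab_eq_span_image, mapCode, mapCodeR, map_span, hIco, Set.image_image, hshift]

theorem sumCode_pow_Gab {r k : ℕ} (hr : r ≤ k) (i : ℕ) :
    sumCode (θ ^ r) i (Gab θ k g) = Gab θ (k + i * r) g := by
  simp only [sumCode, ← pow_mul, mapCode_pow_Gab]
  rw [← span_iUnion, ← Set.image_iUnion, iUnion_Ico_mul_add hr, Gab_eq_span_image]

variable {θ}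

theorem finrank_Gab (hθ : ∀ x, θ x = x → x ∈ Set.range (algebraMap F E)) (t : ℕ) :
    Module.finrank E (Gab θ t g) = min t (Module.finrank F (span F (Set.range g))) := by
  have hrow : (fun (j : Fin t) i => (θ ^ (j : ℕ)) (g i)) =
      (mooreMatrix (θ : E →ₐ[F] E) t g).row := by
    ext j i
    simp [mooreMatrix]
  rw [← rank_mooreMatrix (σ := (θ : E →ₐ[F] E)) hθ, Matrix.rank_eq_finrank_span_row, Gab, hrow]

theorem Gab_min_finrank (hθ : ∀ x, θ x = x → x ∈ Set.range (algebraMap F E)) (t : ℕ) :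
    Gab θ (min t (Module.finrank F (span F (Set.range g)))) g = Gab θ t g := by
  refine eq_of_le_of_finrank_eq (Gab_mono θ g (min_le_left _ _)) ?_
  rw [finrank_Gab g hθ, finrank_Gab g hθ, min_assoc, min_self]

end Gabidulin

theorem mem_range_algebraMap_of_generator_apply_eq {K L : Type*} [Field K] [Field L] [Algebra K L]
    [IsGalois K L] {σ : L ≃ₐ[K] L} (hσ : ∀ τ : L ≃ₐ[K] L, τ ∈ Subgroup.zpowers σ) {x : L}
    (hx : σ x = x) : x ∈ Set.range (algebraMap K L) := by
  have hle : Subgroup.zpowers σ ≤ MulAction.stabilizer (L ≃ₐ[K] L) x := Subgroup.zpowers_le.2 hx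
  exact (InfiniteGalois.mem_range_algebraMap_iff_fixed x).2 fun τ => hle (hσ τ)

theorem stmt10_general {F : Type} [Field F] [Algebra F E] {n k r : ℕ} (i : ℕ) (hr : r ≤ k)
    (θ : E ≃ₐ[F] E) (hθ : ∀ x, θ x = x → x ∈ Set.range (algebraMap F E)) (g : Fin n → E) :
    sumCode (θ ^ r) i (Gab θ k g) =
        Gab θ (min (k + i * r) (Module.finrank F (span F (Set.range g)))) g ∧
      Module.finrank E (sumCode (θ ^ r) i (Gab θ k g)) =
        min (k + i * r) (Module.finrank F (span F (Set.range g))) := by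
  rw [sumCode_pow_Gab θ g hr, Gab_min_finrank g hθ]
  exact ⟨rfl, finrank_Gab g hθ _⟩

/-- for `0 ≤ r ≤ k`,
`S_i^{θ^r}(G_{k,θ}(g)) = ⟨g, θ(g), ..., θ^{min(k+ir,n)-1}(g)⟩`, of dimension
`min (k+ir) n`. -/
theorem stmt10 {F : Type} [Field F] [Algebra F E] [Fintype F] [Fintype E]
    (q m n k i r : ℕ) (hq : IsPrimePow q)
    (hF : Fintype.card F = q) (hE : Fintype.card E = q ^ m)
    (hk : 1 ≤ k) (hkn : k ≤ n) (hnm : n ≤ m) (hr : r ≤ k)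
    (θ : E ≃ₐ[F] E) (hθ : ∀ τ : E ≃ₐ[F] E, τ ∈ Subgroup.zpowers θ)
    (g : Fin n → E)
    (hg : Module.finrank F (Submodule.span F (Set.range g)) = n) :
    sumCode (θ ^ r) i (Gab θ k g) = Gab θ (min (k + i * r) n) g ∧
      Module.finrank E (sumCode (θ ^ r) i (Gab θ k g)) = min (k + i * r) n := by
  simpa only [hg] using
    stmt10_general i hr θ (fun _ => mem_range_algebraMap_of_generator_apply_eq hθ) g
end
end

section
/- Let 0 < k < n ≤ m, θ a generator of Gal(F_{q^m}/F_q), and C an [n,k]_{q^m} code with minimum rank distance greater than 1 such that dim(C + θ(C)) = k+1 and dim(Σ_{j=0}^{n-k} θ^j(C)) = n. Then C is a θ-Gabidulin code, i.e., C = G_{k,θ}(g) for some g ∈ F_{q^m}^n with rk_q(g) = n. -/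
open Submodule

noncomputable section

variable {E : Type} [Field E]

/-!
In a `θ`-stable subspace of `Eⁿ`, a nonzero vector `u` of minimal support, scaled to have an entry
equal to `1`, is fixed by `θ`, because `θ(u) - u` has smaller support. If `F` is the fixed field of
`θ`, such a `u` has rank one, so a code of minimum rank distance greater than one has no nonzero
`θ`-stable subcode. Let `C` be such a code with `dim (C + θ(C)) ≤ dim C + 1` and `dim C ≥ 2`, and
put `D = C ∩ θ⁻¹(C)`; then `dim D = dim C - 1` and, as `D` is not stable, `D + θ(D) = C`. So `D`
inherits the hypotheses, and by induction `D`, hence `C`, is spanned by `g, θ(g), θ²(g), …`.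
Finally, the vectors satisfying a given `F`-linear relation form a `θ`-stable subspace, so a
relation among the entries of `g` would hold on all of `Σ θʲ(C) = Eⁿ`.
-/

theorem exists_ne_zero_fixed_of_stable {K ι : Type*} [DivisionRing K] [Finite ι] (σ : K →+* K)
    {W : Submodule K (ι → K)} (hW : ∀ w ∈ W, σ ∘ w ∈ W) (hne : W ≠ ⊥) :
    ∃ w ∈ W, w ≠ 0 ∧ σ ∘ w = w := by
  obtain ⟨w, ⟨hwW, hw0⟩, hmin⟩ := exists_minimalFor_of_wellFoundedLT
    (fun w ↦ w ∈ W ∧ w ≠ 0) Function.support (W.exists_mem_ne_zero_of_ne_bot hne)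
  obtain ⟨i, hi⟩ := Function.ne_iff.1 hw0
  let u : ι → K := (w i)⁻¹ • w
  have huW : u ∈ W := W.smul_mem _ hwW
  have hui : u i = 1 := inv_mul_cancel₀ hi
  have hsupport : Function.support (σ ∘ u - u) ⊆ Function.support w := by
    intro j hj hwj
    simp [u, hwj] at hj
  have hnotMem : i ∉ Function.support (σ ∘ u - u) := by simp [hui]
  refine ⟨u, huW, fun hu ↦ by simp [hu] at hui, sub_eq_zero.1 ?_⟩
  by_contra hd
  exact hnotMem (hmin ⟨W.sub_mem (hW u huW) huW, hd⟩ hsupport hi)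

theorem mem_range_algebraMap_of_generator_fixed {K L : Type*} [Field K] [Field L] [Algebra K L]
    [IsGalois K L] {θ : L ≃ₐ[K] L} (hθ : ∀ τ : L ≃ₐ[K] L, τ ∈ Subgroup.zpowers θ) {x : L}
    (hx : θ x = x) : x ∈ Set.range (algebraMap K L) := by
  have hle : Subgroup.zpowers θ ≤ MulAction.stabilizer (L ≃ₐ[K] L) x :=
    Subgroup.zpowers_le.2 hx
  exact (InfiniteGalois.mem_range_algebraMap_iff_fixed x).2 fun τ ↦ hle (hθ τ)

theorem finrank_span_range_le_one_of_mem_range_algebraMap {K A ι : Type*} [Field K] [Ring A]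
    [Nontrivial A] [Algebra K A] {w : ι → A} (hw : ∀ i, w i ∈ Set.range (algebraMap K A)) :
    Module.finrank K (span K (Set.range w)) ≤ 1 := by
  have hle : span K (Set.range w) ≤ span K {1} := by
    rw [span_le, Set.range_subset_iff]
    intro i
    obtain ⟨a, ha⟩ := hw i
    exact mem_span_singleton.2 ⟨a, by rw [← ha, Algebra.algebraMap_eq_smul_one]⟩
  exact (finrank_mono hle).trans_eq (finrank_span_singleton one_ne_zero)

section

variable {F : Type} [Field F] [Algebra F E] {n : ℕ}

section MapCode

theorem mem_mapCode {σ : E ≃ₐ[F] E} {C : Submodule E (Fin n → E)} {v : Fin n → E} :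
    v ∈ mapCode σ C ↔ σ.symm ∘ v ∈ C := by
  constructor
  · rintro ⟨w, hw, rfl⟩
    have hsymm : σ.symm ∘ entrywiseR σ.toRingEquiv w = w :=
      funext fun i ↦ σ.symm_apply_apply (w i)
    rw [hsymm]
    exact hw
  · exact fun hv ↦ ⟨_, hv, funext fun i ↦ σ.apply_symm_apply (v i)⟩

theorem mapCode_le_iff {σ : E ≃ₐ[F] E} {C D : Submodule E (Fin n → E)} :
    mapCode σ C ≤ D ↔ ∀ w ∈ C, σ ∘ w ∈ D :=
  map_le_iff_le_comap

theorem mapCode_mono (σ : E ≃ₐ[F] E) {C D : Submodule E (Fin n → E)} (h : C ≤ D) :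
    mapCode σ C ≤ mapCode σ D :=
  map_mono h

theorem mapCode_one (C : Submodule E (Fin n → E)) : mapCode (1 : E ≃ₐ[F] E) C = C :=
  ext fun _ ↦ mem_mapCode

theorem mapCode_mul (σ τ : E ≃ₐ[F] E) (C : Submodule E (Fin n → E)) :
    mapCode (σ * τ) C = mapCode σ (mapCode τ C) := by
  ext v
  simp only [mem_mapCode]
  rfl

theorem mapCode_bot (σ : E ≃ₐ[F] E) : mapCode σ (⊥ : Submodule E (Fin n → E)) = ⊥ :=
  map_bot _

theorem mapCode_inf (σ : E ≃ₐ[F] E) (C D : Submodule E (Fin n → E)) :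
    mapCode σ (C ⊓ D) = mapCode σ C ⊓ mapCode σ D := by
  ext v
  simp only [mem_mapCode, mem_inf]

theorem mapCode_span (σ : E ≃ₐ[F] E) (s : Set (Fin n → E)) :
    mapCode σ (span E s) = span E ((σ ∘ ·) '' s) :=
  map_span _ s

theorem finrank_mapCode (σ : E ≃ₐ[F] E) (C : Submodule E (Fin n → E)) :
    Module.finrank E (mapCode σ C) = Module.finrank E C := by
  have hinj : Function.Injective (entrywiseR (n := n) σ.toRingEquiv) :=
    σ.injective.comp_left
  have := RingHomInvPair.of_ringEquiv σ.toRingEquiv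
  have := RingHomInvPair.of_ringEquiv_symm σ.toRingEquiv
  let e := equivMapOfInjective (entrywiseR σ.toRingEquiv) hinj C
  have hrank : Module.rank E C = Module.rank E (mapCode σ C) :=
    rank_eq_of_equiv_equiv σ e.toAddEquiv σ.bijective e.map_smulₛₗ
  exact congrArg Cardinal.toNat hrank.symm

theorem mapCode_pow_le_of_stable {θ : E ≃ₐ[F] E} {W : Submodule E (Fin n → E)}
    (hW : mapCode θ W ≤ W) (j : ℕ) : mapCode (θ ^ j) W ≤ W := by
  induction j with
  | zero => rw [pow_zero, mapCode_one]
  | succ j ih =>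
    rw [pow_succ, mapCode_mul]
    exact (mapCode_mono _ hW).trans ih

theorem sumCode_one (σ : E ≃ₐ[F] E) (C : Submodule E (Fin n → E)) :
    sumCode σ 1 C = C ⊔ mapCode σ C := by
  simp [sumCode, ← Finset.sup_univ_eq_iSup, Fin.univ_succ, mapCode_one]

theorem sumCode_le_of_stable {θ : E ≃ₐ[F] E} {C W : Submodule E (Fin n → E)}
    (hW : mapCode θ W ≤ W) (hCW : C ≤ W) (i : ℕ) : sumCode θ i C ≤ W :=
  iSup_le fun j ↦ (mapCode_mono _ hCW).trans (mapCode_pow_le_of_stable hW j)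

end MapCode

section Gab

variable (θ : E ≃ₐ[F] E) (k : ℕ) (g : Fin n → E)

theorem gab_zero : Gab θ 0 g = ⊥ := by
  simp [Gab]

theorem gab_succ : Gab θ (k + 1) g = span E {g} ⊔ mapCode θ (Gab θ k g) := by
  rw [Gab, Gab, mapCode_span, ← span_union, ← Set.range_comp, Fin.range_fin_succ,
    Set.insert_eq]
  congr! 3
  funext j i
  simp [Fin.tail, pow_succ']

theorem gab_one : Gab θ 1 g = span E {g} := by
  rw [gab_succ, gab_zero, mapCode_bot, sup_bot_eq]

theorem gab_le_gab_succ : Gab θ k g ≤ Gab θ (k + 1) g := by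
  induction k with
  | zero => simp [gab_zero]
  | succ k ih =>
    rw [gab_succ θ k, gab_succ θ (k + 1)]
    exact sup_le_sup_left (mapCode_mono θ ih) _

theorem gab_sup_mapCode_gab (hk : k ≠ 0) :
    Gab θ k g ⊔ mapCode θ (Gab θ k g) = Gab θ (k + 1) g := by
  obtain ⟨j, rfl⟩ := Nat.exists_eq_succ_of_ne_zero hk
  have hg : span E {g} ≤ Gab θ (j + 1) g := le_sup_left.trans_eq (gab_succ θ j g).symm
  apply le_antisymm
  · exact sup_le (gab_le_gab_succ ..) (le_sup_right.trans_eq (gab_succ ..).symm)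
  · rw [gab_succ θ (j + 1)]
    exact sup_le_sup_right hg _

variable {θ k g}

theorem gab_le_of_stable {W : Submodule E (Fin n → E)} (hW : mapCode θ W ≤ W) (hg : g ∈ W) :
    Gab θ k g ≤ W := by
  induction k with
  | zero => simp [gab_zero]
  | succ k ih =>
    rw [gab_succ]
    exact sup_le ((span_singleton_le_iff_mem ..).2 hg) ((mapCode_mono θ ih).trans hW)

end Gab

section StableSubcode

variable {θ : E ≃ₐ[F] E} {C : Submodule E (Fin n → E)}

/-- The only `θ`-stable subspace of `C` is zero. In the induction on dimension this replaces the
condition that `C` has minimum rank distance greater than one. -/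
def HasNoStableSubcode (θ : E ≃ₐ[F] E) (C : Submodule E (Fin n → E)) : Prop :=
  ∀ W ≤ C, mapCode θ W ≤ W → W = ⊥

/-- The subcode `C ∩ θ⁻¹(C)` of all `c ∈ C` with `θ(c) ∈ C`, which serves to lower the dimension in
the induction. -/
def shiftSubcode (θ : E ≃ₐ[F] E) (C : Submodule E (Fin n → E)) : Submodule E (Fin n → E) :=
  C ⊓ mapCode θ⁻¹ C

variable (θ C)

theorem shiftSubcode_le : shiftSubcode θ C ≤ C :=
  inf_le_left

theorem mapCode_shiftSubcode : mapCode θ (shiftSubcode θ C) = C ⊓ mapCode θ C := by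
  rw [shiftSubcode, mapCode_inf, ← mapCode_mul, mul_inv_cancel, mapCode_one, inf_comm]

theorem shiftSubcode_sup_mapCode_le : shiftSubcode θ C ⊔ mapCode θ (shiftSubcode θ C) ≤ C :=
  sup_le (shiftSubcode_le θ C) ((mapCode_shiftSubcode θ C).trans_le inf_le_left)

theorem finrank_sup_mapCode_add_finrank_shiftSubcode :
    Module.finrank E ↥(C ⊔ mapCode θ C) + Module.finrank E (shiftSubcode θ C) =
      Module.finrank E C + Module.finrank E C := by
  have h := finrank_sup_add_finrank_inf_eq C (mapCode θ C)
  rwa [← mapCode_shiftSubcode, finrank_mapCode, finrank_mapCode] at h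

variable {θ C}

namespace HasNoStableSubcode

theorem of_forall_one_lt_finrank (hθ : ∀ x : E, θ x = x → x ∈ Set.range (algebraMap F E))
    (hdist : ∀ c ∈ C, c ≠ 0 → 1 < Module.finrank F (span F (Set.range c))) :
    HasNoStableSubcode θ C := by
  intro W hWC hW
  by_contra hne
  obtain ⟨w, hwW, hw0, hfix⟩ :=
    exists_ne_zero_fixed_of_stable (θ : E →+* E) (mapCode_le_iff.1 hW) hne
  have hrange : ∀ i, w i ∈ Set.range (algebraMap F E) := fun i ↦ hθ _ (congrFun hfix i)
  exact (hdist w (hWC hwW) hw0).not_ge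
    (finrank_span_range_le_one_of_mem_range_algebraMap hrange)

theorem mono {D : Submodule E (Fin n → E)} (hC : HasNoStableSubcode θ C) (hDC : D ≤ C) :
    HasNoStableSubcode θ D :=
  fun W hWD ↦ hC W (hWD.trans hDC)

theorem finrank_lt_finrank_sup_mapCode (hC : HasNoStableSubcode θ C) (hne : C ≠ ⊥) :
    Module.finrank E C < Module.finrank E ↥(C ⊔ mapCode θ C) :=
  finrank_lt_finrank_of_lt (left_lt_sup.2 fun h ↦ hne (hC C le_rfl h))

theorem finrank_shiftSubcode_add_one (hC : HasNoStableSubcode θ C) (hne : C ≠ ⊥)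
    (hsup : Module.finrank E ↥(C ⊔ mapCode θ C) ≤ Module.finrank E C + 1) :
    Module.finrank E (shiftSubcode θ C) + 1 = Module.finrank E C := by
  have hlt := hC.finrank_lt_finrank_sup_mapCode hne
  have hadd := finrank_sup_mapCode_add_finrank_shiftSubcode θ C
  omega

theorem shiftSubcode_sup_mapCode_eq (hC : HasNoStableSubcode θ C)
    (hsup : Module.finrank E ↥(C ⊔ mapCode θ C) ≤ Module.finrank E C + 1)
    (hne : shiftSubcode θ C ≠ ⊥) :
    shiftSubcode θ C ⊔ mapCode θ (shiftSubcode θ C) = C := by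
  have hlt := (hC.mono (shiftSubcode_le θ C)).finrank_lt_finrank_sup_mapCode hne
  have hdim := hC.finrank_shiftSubcode_add_one (ne_bot_of_le_ne_bot hne (shiftSubcode_le θ C)) hsup
  exact eq_of_le_of_finrank_le (shiftSubcode_sup_mapCode_le θ C) (by omega)

theorem exists_eq_gab (hC : HasNoStableSubcode θ C)
    (hsup : Module.finrank E ↥(C ⊔ mapCode θ C) ≤ Module.finrank E C + 1) :
    ∃ g, C = Gab θ (Module.finrank E C) g := by
  induction hk : Module.finrank E C generalizing C with
  | zero => exact ⟨0, by rw [gab_zero, ← finrank_eq_zero (R := E), hk]⟩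
  | succ k ih =>
    have hCne : C ≠ ⊥ := one_le_finrank_iff.1 (by omega)
    have hdim := hC.finrank_shiftSubcode_add_one hCne hsup
    have hle := finrank_mono (shiftSubcode_sup_mapCode_le θ C)
    obtain ⟨g, hg⟩ := ih (hC.mono (shiftSubcode_le θ C)) (by omega) (by omega)
    obtain rfl | hk0 := eq_or_ne k 0
    · obtain ⟨v, hv⟩ := (finrank_le_one_iff_isPrincipal C).1 hk.le
      exact ⟨v, by rw [gab_one, hv]⟩
    · have hne : shiftSubcode θ C ≠ ⊥ := one_le_finrank_iff.1 (by omega)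
      refine ⟨g, ?_⟩
      rw [← gab_sup_mapCode_gab θ k g hk0, ← hg, hC.shiftSubcode_sup_mapCode_eq hsup hne]

end HasNoStableSubcode

end StableSubcode

section RelationCode

variable (E) in
/-- The code of all vectors over `E` whose entries satisfy the `F`-linear relation with
coefficients `a`. -/
def relationCode (a : Fin n → F) : Submodule E (Fin n → E) :=
  LinearMap.ker (∑ i, a i • LinearMap.proj i : (Fin n → E) →ₗ[E] E)

theorem mem_relationCode {a : Fin n → F} {v : Fin n → E} :
    v ∈ relationCode E a ↔ ∑ i, a i • v i = 0 := by
  simp [relationCode]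

theorem mapCode_relationCode_le (σ : E ≃ₐ[F] E) (a : Fin n → F) :
    mapCode σ (relationCode E a) ≤ relationCode E a := by
  refine mapCode_le_iff.2 fun w hw ↦ mem_relationCode.2 ?_
  simpa using congrArg σ (mem_relationCode.1 hw)

theorem eq_zero_of_relationCode_eq_top {a : Fin n → F} (ha : relationCode E a = ⊤) : a = 0 := by
  funext i
  have hi : Pi.single i (1 : E) ∈ relationCode E a := ha ▸ mem_top
  simpa [mem_relationCode, Pi.single_apply] using hi

theorem linearIndependent_of_sumCode_gab_eq_top {θ : E ≃ₐ[F] E} {k i : ℕ} {g : Fin n → E}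
    (h : sumCode θ i (Gab θ k g) = ⊤) : LinearIndependent F g := by
  refine Fintype.linearIndependent_iff.2 fun a ha ↦ congrFun ?_
  have hstable := mapCode_relationCode_le θ a
  have hgab : Gab θ k g ≤ relationCode E a := gab_le_of_stable hstable (mem_relationCode.2 ha)
  exact eq_zero_of_relationCode_eq_top (top_le_iff.1 (h ▸ sumCode_le_of_stable hstable hgab i))

end RelationCode

end

theorem stmt18_general {F : Type} [Field F] [Algebra F E] {n i : ℕ} (θ : E ≃ₐ[F] E)
    (hθ : ∀ x : E, θ x = x → x ∈ Set.range (algebraMap F E))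
    (C : Submodule E (Fin n → E))
    (hdist : ∀ c ∈ C, c ≠ 0 → 1 < Module.finrank F (span F (Set.range c)))
    (hsup : Module.finrank E (sumCode θ 1 C) ≤ Module.finrank E C + 1)
    (hsum : Module.finrank E (sumCode θ i C) = n) :
    ∃ g : Fin n → E,
      Module.finrank F (span F (Set.range g)) = n ∧ C = Gab θ (Module.finrank E C) g := by
  obtain ⟨g, hg⟩ :=
    (HasNoStableSubcode.of_forall_one_lt_finrank hθ hdist).exists_eq_gab (sumCode_one θ C ▸ hsup)
  have htop : sumCode θ i C = ⊤ := eq_top_of_finrank_eq (by rw [hsum, Module.finrank_fin_fun])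
  have hli : LinearIndependent F g := linearIndependent_of_sumCode_gab_eq_top (hg ▸ htop)
  exact ⟨g, by rw [finrank_span_eq_card hli, Fintype.card_fin], hg⟩

/-- characterization of Gabidulin codes: if `d(C) > 1`,
`dim(C + θ(C)) = k+1` and `dim(Σ_{j=0}^{n-k} θ^j(C)) = n`, then `C` is a
θ-Gabidulin code. -/
theorem stmt18 {F : Type} [Field F] [Algebra F E] [Fintype F] [Fintype E]
    (q m n k : ℕ) (hq : IsPrimePow q)
    (hF : Fintype.card F = q) (hE : Fintype.card E = q ^ m)
    (hk : 0 < k) (hkn : k < n) (hnm : n ≤ m)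
    (θ : E ≃ₐ[F] E) (hθ : ∀ τ : E ≃ₐ[F] E, τ ∈ Subgroup.zpowers θ)
    (C : Submodule E (Fin n → E)) (hC : Module.finrank E C = k)
    (hdist : ∀ c ∈ C, c ≠ 0 → 1 < Module.finrank F (Submodule.span F (Set.range c)))
    (hs1 : Module.finrank E (sumCode θ 1 C) = k + 1)
    (hsn : Module.finrank E (sumCode θ (n - k) C) = n) :
    ∃ g : Fin n → E,
      Module.finrank F (Submodule.span F (Set.range g)) = n ∧ C = Gab θ k g := by
  subst hC
  exact stmt18_general θ (fun _ ↦ mem_range_algebraMap_of_generator_fixed hθ)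
    C hdist hs1.le hsn
end
end
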